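/- Consider the And example: (X₁, X₂) is uniformly distributed on Fin 2 × Fin 2 and Y = X₁ AND X₂ (Y = 1 iff X₁ = 1 and X₂ = 1). For any random variable Q on a finite type jointly distributed with (X₁, X₂, Y) consistently with this distribution, if H(Q|X₁) = 0 and H(Q|X₂) = 0, then I(Q:Y) = 0. (Hence I_∧(X₁, X₂ : Y) = 0 for the And example.) -/

import Mathlib

open Real Finset

/- STATEMENT 11: The And example.  `(X₁, X₂)` is uniform on `Fin 2 × Fin 2` and
`Y = X₁ AND X₂` (i.e. `y = x₁ * x₂` in `Fin 2`).  For any `Q` jointly distributed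
with `(X₁, X₂, Y)` consistently with this distribution, if `H(Q|X₁) = 0` and
`H(Q|X₂) = 0` then `I(Q:Y) = 0`.  Hence `I_∧(X₁, X₂ : Y) = 0` for And. -/

section Defs

variable {Q A B C : Type*} [Fintype Q] [Fintype A] [Fintype B] [Fintype C]

/-- Marginal of `Q`. -/
noncomputable def margQ (p : Q × A × B × C → ℝ) (q : Q) : ℝ :=
  ∑ a, ∑ b, ∑ c, p (q, a, b, c)

/-- Marginal of `X₁`. -/
noncomputable def margX1 (p : Q × A × B × C → ℝ) (a : A) : ℝ :=
  ∑ q, ∑ b, ∑ c, p (q, a, b, c)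

/-- Marginal of `X₂`. -/
noncomputable def margX2 (p : Q × A × B × C → ℝ) (b : B) : ℝ :=
  ∑ q, ∑ a, ∑ c, p (q, a, b, c)

/-- Marginal of `Y`. -/
noncomputable def margY (p : Q × A × B × C → ℝ) (c : C) : ℝ :=
  ∑ q, ∑ a, ∑ b, p (q, a, b, c)

/-- Marginal of `(Q, X₁)`. -/
noncomputable def margQX1 (p : Q × A × B × C → ℝ) (q : Q) (a : A) : ℝ :=
  ∑ b, ∑ c, p (q, a, b, c)

/-- Marginal of `(Q, X₂)`. -/
noncomputable def margQX2 (p : Q × A × B × C → ℝ) (q : Q) (b : B) : ℝ :=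
  ∑ a, ∑ c, p (q, a, b, c)

/-- Marginal of `(Q, Y)`. -/
noncomputable def margQY (p : Q × A × B × C → ℝ) (q : Q) (c : C) : ℝ :=
  ∑ a, ∑ b, p (q, a, b, c)

/-- Conditional entropy `H(Q|X₁)`. -/
noncomputable def condEntQX1 (p : Q × A × B × C → ℝ) : ℝ :=
  -∑ q, ∑ a, margQX1 p q a * logb 2 (margQX1 p q a / margX1 p a)

/-- Conditional entropy `H(Q|X₂)`. -/
noncomputable def condEntQX2 (p : Q × A × B × C → ℝ) : ℝ :=
  -∑ q, ∑ b, margQX2 p q b * logb 2 (margQX2 p q b / margX2 p b)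

/-- Mutual information `I(Q:Y)`. -/
noncomputable def miQY (p : Q × A × B × C → ℝ) : ℝ :=
  ∑ q, ∑ c, margQY p q c * logb 2 (margQY p q c / (margQ p q * margY p c))

end Defs

/-! A vanishing conditional entropy makes `Q` almost surely a function of `X₁`, and likewise of
`X₂`. When every pair `(a, b)` has positive probability, a value `q` of positive probability occurs
together with some `X₁ = a`, hence surely given `X₁ = a`, hence together with every `X₂ = b`, hence
surely. So `Q` is constant, and therefore independent of `Y`, whatever `Y` is. -/

section FiniteSums

variable {ι κ : Type*} [Fintype ι] {w : ι → κ → ℝ}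

/-- For a joint mass function `w` of `(I, K)`: almost surely `I` is a function of `K`, expressed as
`P(I = i, K = k) ∈ {0, P(K = k)}`, which avoids dividing by `P(K = k)`. -/
def IsFunctionOfSnd (w : ι → κ → ℝ) : Prop :=
  ∀ i k, w i k = 0 ∨ w i k = ∑ j, w j k

theorem le_sum_fst (hw : ∀ i k, 0 ≤ w i k) (i : ι) (k : κ) : w i k ≤ ∑ j, w j k :=
  single_le_sum (f := fun j => w j k) (fun j _ => hw j k) (mem_univ i)

theorem eq_sum_fst_of_sum_eq_sum_sum [Fintype κ] (hw : ∀ i k, 0 ≤ w i k) {i : ι}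
    (h : ∑ k, w i k = ∑ j, ∑ k, w j k) (k : κ) : w i k = ∑ j, w j k := by
  rw [sum_comm] at h
  exact (sum_eq_sum_iff_of_le fun k _ => le_sum_fst hw i k).1 h k (mem_univ k)

theorem mul_logb_div_nonpos {b x s : ℝ} (hb : 1 < b) (hx : 0 ≤ x) (hxs : x ≤ s) :
    x * logb b (x / s) ≤ 0 :=
  mul_nonpos_of_nonneg_of_nonpos hx <|
    logb_nonpos hb (div_nonneg hx (hx.trans hxs)) (div_le_one_of_le₀ hxs (hx.trans hxs))

theorem eq_zero_or_eq_of_mul_logb_div_eq_zero {b x s : ℝ} (hb : 1 < b) (hx : 0 ≤ x) (hxs : x ≤ s)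
    (h : x * logb b (x / s) = 0) : x = 0 ∨ x = s := by
  refine hx.eq_or_lt.imp Eq.symm fun hx_pos => ?_
  have hs_pos : 0 < s := hx_pos.trans_le hxs
  have hlog : logb b (x / s) = 0 := (mul_eq_zero.1 h).resolve_left hx_pos.ne'
  have hdiv : x / s = 1 := eq_one_of_pos_of_logb_eq_zero hb (div_pos hx_pos hs_pos) hlog
  exact (div_eq_one_iff_eq hs_pos.ne').1 hdiv

theorem isFunctionOfSnd_of_condEnt_eq_zero [Fintype κ] {b : ℝ} (hb : 1 < b)
    (hw : ∀ i k, 0 ≤ w i k)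
    (h : -∑ i, ∑ k, w i k * logb b (w i k / ∑ j, w j k) = 0) : IsFunctionOfSnd w := by
  intro i k
  have hterm (i : ι) (k : κ) : w i k * logb b (w i k / ∑ j, w j k) ≤ 0 :=
    mul_logb_div_nonpos hb (hw i k) (le_sum_fst hw i k)
  have hrow : ∑ k, w i k * logb b (w i k / ∑ j, w j k) = 0 :=
    (sum_eq_zero_iff_of_nonpos fun i _ => sum_nonpos fun k _ => hterm i k).1
      (neg_eq_zero.1 h) i (mem_univ i)
  exact eq_zero_or_eq_of_mul_logb_div_eq_zero hb (hw i k) (le_sum_fst hw i k)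
    ((sum_eq_zero_iff_of_nonpos fun k _ => hterm i k).1 hrow k (mem_univ k))

end FiniteSums

section Marginals

variable {Q A B C : Type*} {p : Q × A × B × C → ℝ}

theorem margQX1_nonneg [Fintype B] [Fintype C] (hp : ∀ x, 0 ≤ p x) (q : Q) (a : A) :
    0 ≤ margQX1 p q a :=
  sum_nonneg fun _ _ => sum_nonneg fun _ _ => hp _

theorem margQX2_nonneg [Fintype A] [Fintype C] (hp : ∀ x, 0 ≤ p x) (q : Q) (b : B) :
    0 ≤ margQX2 p q b :=
  sum_nonneg fun _ _ => sum_nonneg fun _ _ => hp _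

theorem margQY_nonneg [Fintype A] [Fintype B] (hp : ∀ x, 0 ≤ p x) (q : Q) (c : C) :
    0 ≤ margQY p q c :=
  sum_nonneg fun _ _ => sum_nonneg fun _ _ => hp _

variable [Fintype A] [Fintype B] [Fintype C]

theorem sum_margQX2 (q : Q) : ∑ b, margQX2 p q b = margQ p q :=
  sum_comm

theorem sum_margQY (q : Q) : ∑ c, margQY p q c = margQ p q := by
  simp only [margQY, margQ, sum_comm (s := (univ : Finset C))]

variable [Fintype Q]

theorem sum_margQ : ∑ q, margQ p q = ∑ x, p x := by
  simp only [margQ, Fintype.sum_prod_type]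

theorem isFunctionOfSnd_margQX1 (hp : ∀ x, 0 ≤ p x) (h : condEntQX1 p = 0) :
    IsFunctionOfSnd (margQX1 p) :=
  isFunctionOfSnd_of_condEnt_eq_zero one_lt_two (margQX1_nonneg hp) h

theorem isFunctionOfSnd_margQX2 (hp : ∀ x, 0 ≤ p x) (h : condEntQX2 p = 0) :
    IsFunctionOfSnd (margQX2 p) :=
  isFunctionOfSnd_of_condEnt_eq_zero one_lt_two (margQX2_nonneg hp) h

theorem margQ_eq_zero_or_eq_sum (hp : ∀ x, 0 ≤ p x)
    (hsupp : ∀ a b, 0 < ∑ q, ∑ c, p (q, a, b, c))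
    (h1 : IsFunctionOfSnd (margQX1 p)) (h2 : IsFunctionOfSnd (margQX2 p)) (q : Q) :
    margQ p q = 0 ∨ margQ p q = ∑ x, p x := by
  refine or_iff_not_imp_left.2 fun hq => ?_
  have hnn (q : Q) (a : A) (b : B) : 0 ≤ ∑ c, p (q, a, b, c) := sum_nonneg fun _ _ => hp _
  obtain ⟨a, -, ha⟩ : ∃ a ∈ univ, margQX1 p q a ≠ 0 := exists_ne_zero_of_sum_ne_zero hq
  have hab (b : B) : ∑ c, p (q, a, b, c) = ∑ q', ∑ c, p (q', a, b, c) :=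
    eq_sum_fst_of_sum_eq_sum_sum (fun q b => hnn q a b) ((h1 q a).resolve_left ha) b
  have hb_pos (b : B) : 0 < margQX2 p q b :=
    calc 0 < ∑ c, p (q, a, b, c) := by rw [hab]; exact hsupp a b
      _ ≤ margQX2 p q b := le_sum_fst (w := fun a b => ∑ c, p (q, a, b, c)) (hnn q) a b
  calc margQ p q = ∑ b, margQX2 p q b := (sum_margQX2 q).symm
    _ = ∑ b, ∑ q', margQX2 p q' b :=
      sum_congr rfl fun b _ => (h2 q b).resolve_left (hb_pos b).ne'
    _ = ∑ q', margQ p q' := by rw [sum_comm]; simp only [sum_margQX2]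
    _ = ∑ x, p x := sum_margQ

theorem margQY_eq_mul_of_margQ_eq_zero_or_one (hp : p ∈ stdSimplex ℝ (Q × A × B × C)) {q : Q}
    (hq : margQ p q = 0 ∨ margQ p q = 1) (c : C) :
    margQY p q c = margQ p q * margY p c := by
  obtain ⟨hnn, hsum⟩ := hp
  rcases hq with hq | hq
  · have hqY : ∑ c, margQY p q c = 0 := by rw [sum_margQY, hq]
    rw [hq, zero_mul]
    exact (sum_eq_zero_iff_of_nonneg fun c _ => margQY_nonneg hnn q c).1 hqY c (mem_univ c)
  · have hqY : ∑ c, margQY p q c = ∑ q', ∑ c, margQY p q' c := by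
      simp only [sum_margQY, sum_margQ, hq, hsum]
    rw [hq, one_mul]
    exact eq_sum_fst_of_sum_eq_sum_sum (margQY_nonneg hnn) hqY c

theorem miQY_eq_zero_of_margQY_eq_mul (h : ∀ q c, margQY p q c = margQ p q * margY p c) :
    miQY p = 0 := by
  refine sum_eq_zero fun q _ => sum_eq_zero fun c _ => ?_
  rw [← h]
  rcases eq_or_ne (margQY p q c) 0 with h0 | h0
  · rw [h0, zero_mul]
  · rw [div_self h0, logb_one, mul_zero]

theorem stmt_11_general (hp : p ∈ stdSimplex ℝ (Q × A × B × C))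
    (hsupp : ∀ a b, 0 < ∑ q, ∑ c, p (q, a, b, c))
    (h1 : condEntQX1 p = 0) (h2 : condEntQX2 p = 0) : miQY p = 0 := by
  refine miQY_eq_zero_of_margQY_eq_mul fun q => margQY_eq_mul_of_margQ_eq_zero_or_one hp ?_
  rw [← hp.2]
  exact margQ_eq_zero_or_eq_sum hp.1 hsupp (isFunctionOfSnd_margQX1 hp.1 h1)
    (isFunctionOfSnd_margQX2 hp.1 h2) q

end Marginals

section And

variable {Q : Type*} [Fintype Q] {p : Q × Fin 2 × Fin 2 × Fin 2 → ℝ}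

theorem sum_eq_one_of_and
    (hmarg : ∀ x₁ x₂ y : Fin 2,
      (∑ q, p (q, x₁, x₂, y)) = if y = x₁ * x₂ then (1 : ℝ) / 4 else 0) :
    ∑ x, p x = 1 := by
  rw [Fintype.sum_prod_type_right]
  simp only [Fintype.sum_prod_type, hmarg, sum_ite_eq', mem_univ, if_true, sum_const, card_univ,
    Fintype.card_fin]
  norm_num

theorem sum_sum_pos_of_and
    (hmarg : ∀ x₁ x₂ y : Fin 2,
      (∑ q, p (q, x₁, x₂, y)) = if y = x₁ * x₂ then (1 : ℝ) / 4 else 0) (x₁ x₂ : Fin 2) :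
    0 < ∑ q, ∑ y, p (q, x₁, x₂, y) := by
  rw [sum_comm]
  simp only [hmarg, sum_ite_eq', mem_univ, if_true]
  norm_num

end And

theorem stmt_11 {Q : Type*} [Fintype Q]
    (p : Q × Fin 2 × Fin 2 × Fin 2 → ℝ)
    (hnn : ∀ a, 0 ≤ p a)
    (hmarg : ∀ x₁ x₂ y : Fin 2,
      (∑ q, p (q, x₁, x₂, y)) = if y = x₁ * x₂ then (1 : ℝ) / 4 else 0)
    (h1 : condEntQX1 p = 0)
    (h2 : condEntQX2 p = 0) :
    miQY p = 0 :=
  stmt_11_general ⟨hnn, sum_eq_one_of_and hmarg⟩ (sum_sum_pos_of_and hmarg) h1 h2
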